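/- Let G be a graph with independence number α = α(G), M a perfect matching of G, and C an M-alternating cycle. Let P ⊆ C be a blue M-alternating path of length at least 6·R(R(4,α+1), α+1), starting with a non-matching edge and not containing any 0-skip. Then there exist two edges e1 = (b1,b2) and e2 = (w1,w2) of G with all four endpoints on P, at least one of e1, e2 being red, such that C' = e1 ∪ e2 ∪ C[b1,w1] ∪ C[b2,w2] is an M-alternating cycle with 0 < w_M(C') ≤ 2 whose number of red edges equals w_M(C'). Symmetrically, if P ⊆ C is a red M-alternating path of length at least 6·R(R(4,α+1), α+1), starting with a non-matching edge and not containing any 0-skip, then there exist such edges e1, e2, at least one of them blue, with C' an M-alternating cycle satisfying −2 ≤ w_M(C') < 0 whose number of blue edges equals |w_M(C')|. -/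

import Mathlib

open Finset

/-- `M` is (the edge set of) a perfect matching of `G`: all its edges are edges of `G` and
every vertex belongs to exactly one edge of `M`. -/
def IsPM {V : Type*} [DecidableEq V] (G : SimpleGraph V) (M : Finset (Sym2 V)) : Prop :=
  ↑M ⊆ G.edgeSet ∧ ∀ v : V, ∃! e, e ∈ M ∧ v ∈ e

/-- Number of red edges in the edge set `F` (the coloring `red` marks the red edges). -/
def redCount {V : Type*} [DecidableEq V] (red : Sym2 V → Bool) (F : Finset (Sym2 V)) : ℕ :=
  (F.filter fun e => red e = true).card

/-- Number of blue edges in the edge set `F`. -/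
def blueCount {V : Type*} [DecidableEq V] (red : Sym2 V → Bool) (F : Finset (Sym2 V)) : ℕ :=
  (F.filter fun e => red e = false).card

/-- The weight `w_M(e)`: 0 for blue edges, +1 for red non-matching edges, −1 for red
matching edges. -/
def wt {V : Type*} [DecidableEq V] (red : Sym2 V → Bool) (M : Finset (Sym2 V))
    (e : Sym2 V) : ℤ :=
  if red e then (if e ∈ M then -1 else 1) else 0

/-- `w_M(F)`, the total weight of an edge set `F`. -/
def wSum {V : Type*} [DecidableEq V] (red : Sym2 V → Bool) (M F : Finset (Sym2 V)) : ℤ :=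
  ∑ e ∈ F, wt red M e

/-- A list of edges alternates with respect to the matching `M`: consecutive edges are
alternately in and out of `M`. -/
def altList {V : Type*} [DecidableEq V] (M : Finset (Sym2 V)) (l : List (Sym2 V)) : Prop :=
  l.Chain' fun e f => ¬((e ∈ M) ↔ (f ∈ M))

/-- `C` is (the edge set of) an `M`-alternating cycle in `G`: it is traced by a cycle walk
whose edges alternate (cyclically) between `M` and non-`M` edges. -/
def IsAltCycle {V : Type*} [DecidableEq V] (G : SimpleGraph V)
    (M C : Finset (Sym2 V)) : Prop :=
  ∃ (v : V) (p : G.Walk v v), p.IsCycle ∧ p.edges.toFinset = C ∧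
    altList M (p.edges ++ p.edges.take 1)

/-- `P` is (the edge set of) an `M`-alternating path in `G`. -/
def IsAltPath {V : Type*} [DecidableEq V] (G : SimpleGraph V)
    (M P : Finset (Sym2 V)) : Prop :=
  ∃ (u v : V) (p : G.Walk u v), p.IsPath ∧ p.edges.toFinset = P ∧ altList M p.edges

/-- The symmetric difference of two edge sets. -/
def sd {V : Type*} [DecidableEq V] (M M' : Finset (Sym2 V)) : Finset (Sym2 V) :=
  (M \ M') ∪ (M' \ M)

/-- The set of vertices covered by an edge set. -/
def edgeVerts {V : Type*} (F : Finset (Sym2 V)) : Set V := {v | ∃ e ∈ F, v ∈ e}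

/-- `𝒞` is a set of pairwise vertex-disjoint `M`-alternating cycles of `G`. -/
def IsAltCycleSet {V : Type*} [DecidableEq V] (G : SimpleGraph V) (M : Finset (Sym2 V))
    (𝒞 : Finset (Finset (Sym2 V))) : Prop :=
  (∀ C ∈ 𝒞, IsAltCycle G M C) ∧
    (𝒞 : Set (Finset (Sym2 V))).Pairwise fun C C' => Disjoint (edgeVerts C) (edgeVerts C')

/-- A skip on the `M`-alternating cycle `C` (with respect to the coloring `red`):
two non-matching chords `e1 ≠ e2` of `C`, not edges of `C`, such that replacing two
stretches of `C` by them yields a strictly shorter `M`-alternating cycle `C'` whose weight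
differs from that of `C` by at most 4 in absolute value. -/
structure Skip {V : Type*} [DecidableEq V] (G : SimpleGraph V) (red : Sym2 V → Bool)
    (M C : Finset (Sym2 V)) where
  e1 : Sym2 V
  e2 : Sym2 V
  C' : Finset (Sym2 V)
  hne : e1 ≠ e2
  he1G : e1 ∈ G.edgeSet
  he2G : e2 ∈ G.edgeSet
  he1M : e1 ∉ M
  he2M : e2 ∉ M
  he1C : e1 ∉ C
  he2C : e2 ∉ C
  halt : IsAltCycle G M C'
  hmem1 : e1 ∈ C'
  hmem2 : e2 ∈ C'
  hsub : C' \ {e1, e2} ⊆ C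
  hsmall : C'.card < C.card
  hwbound : |wSum red M C' - wSum red M C| ≤ 4

/-- The weight `w(S) = w_M(C') − w_M(C)` of a skip. -/
def Skip.w {V : Type*} [DecidableEq V] {G : SimpleGraph V} {red : Sym2 V → Bool}
    {M C : Finset (Sym2 V)} (S : Skip G red M C) : ℤ :=
  wSum red M S.C' - wSum red M C

/-- The skip `S` is contained in the path `P` along `C`: the stretch of `C` removed by
the skip lies on `P`. -/
def Skip.In {V : Type*} [DecidableEq V] {G : SimpleGraph V} {red : Sym2 V → Bool}
    {M C : Finset (Sym2 V)} (S : Skip G red M C) (P : Finset (Sym2 V)) : Prop :=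
  C \ S.C' ⊆ P

/-- Two skips on `C` are disjoint: they are contained in disjoint paths along `C`. -/
def Skip.Disj {V : Type*} [DecidableEq V] {G : SimpleGraph V} {red : Sym2 V → Bool}
    {M C : Finset (Sym2 V)} (S1 S2 : Skip G red M C) : Prop :=
  ∃ P1 P2 : Finset (Sym2 V), P1 ⊆ C ∧ P2 ⊆ C ∧ Disjoint P1 P2 ∧
    IsAltPath G M P1 ∧ IsAltPath G M P2 ∧ S1.In P1 ∧ S2.In P2

/-- A skip living on one of the cycles of the family `𝒞`. -/
structure SkipOn {V : Type*} [DecidableEq V] (G : SimpleGraph V) (red : Sym2 V → Bool)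
    (M : Finset (Sym2 V)) (𝒞 : Finset (Finset (Sym2 V))) where
  C : Finset (Sym2 V)
  hC : C ∈ 𝒞
  S : Skip G red M C

/-- Two skips on cycles of `𝒞` are disjoint: either they live on different
(vertex-disjoint) cycles, or they are disjoint skips on the same cycle. -/
def SkipOn.Disj {V : Type*} [DecidableEq V] {G : SimpleGraph V} {red : Sym2 V → Bool}
    {M : Finset (Sym2 V)} {𝒞 : Finset (Finset (Sym2 V))}
    (T1 T2 : SkipOn G red M 𝒞) : Prop :=
  T1.C ≠ T2.C ∨ ∃ h : T1.C = T2.C, Skip.Disj (h ▸ T1.S) T2.S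

/-- `𝒞` contains a 0-skip set: a nonempty collection of pairwise disjoint skips on cycles
of `𝒞` of total weight 0. -/
def HasZeroSkipSet {V : Type*} [DecidableEq V] (G : SimpleGraph V) (red : Sym2 V → Bool)
    (M : Finset (Sym2 V)) (𝒞 : Finset (Finset (Sym2 V))) : Prop :=
  ∃ L : List (SkipOn G red M 𝒞), L ≠ [] ∧ L.Pairwise SkipOn.Disj ∧
    (L.map fun T => T.S.w).sum = 0

/-- `𝒞` contains a 0-skip-cycle set: a nonempty collection of pairwise disjoint skips on
cycles of `𝒞` and/or whole cycles `D ⊆ 𝒞` (the skips living on cycles not in `D`), such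
that the total weight of the skips minus the total weight of the cycles is 0. -/
def HasZeroSkipCycleSet {V : Type*} [DecidableEq V] (G : SimpleGraph V)
    (red : Sym2 V → Bool) (M : Finset (Sym2 V)) (𝒞 : Finset (Finset (Sym2 V))) : Prop :=
  ∃ (L : List (SkipOn G red M 𝒞)) (D : Finset (Finset (Sym2 V))),
    D ⊆ 𝒞 ∧ (L ≠ [] ∨ D.Nonempty) ∧ L.Pairwise SkipOn.Disj ∧ (∀ T ∈ L, T.C ∉ D) ∧
      (L.map fun T => T.S.w).sum - (∑ C ∈ D, wSum red M C) = 0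

/-- The independence number `α(G)`: the maximum size of a set of pairwise non-adjacent
vertices. -/
noncomputable def indepNum {V : Type*} (G : SimpleGraph V) : ℕ :=
  sSup {n | ∃ s : Finset V, s.card = n ∧ (s : Set V).Pairwise fun u v => ¬ G.Adj u v}

/-- `RamseyProp N s t`: every graph on `N` vertices contains a clique of size `s` or an
independent set of size `t`. -/
def RamseyProp (N s t : ℕ) : Prop :=
  ∀ H : SimpleGraph (Fin N),
    (∃ A : Finset (Fin N), A.card = s ∧ (A : Set (Fin N)).Pairwise H.Adj) ∨
    (∃ B : Finset (Fin N), B.card = t ∧ (B : Set (Fin N)).Pairwise fun u v => ¬ H.Adj u v)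

/-- The Ramsey number `R(s,t)`: the smallest `N` such that every graph on `N` vertices
contains a clique of size `s` or an independent set of size `t`. -/
noncomputable def ramsey (s t : ℕ) : ℕ := sInf {N | RamseyProp N s t}

theorem ramsey_aux (s t : ℕ) : ∃ N : ℕ, ∀ (V : Type) (H : SimpleGraph V) (S : Finset V), N ≤ S.card →
    (∃ A ⊆ S, A.card = s ∧ (A : Set V).Pairwise H.Adj) ∨
    (∃ B ⊆ S, B.card = t ∧ (B : Set V).Pairwise fun u v => ¬ H.Adj u v) := by
  classical
  induction s generalizing t with
  | zero => exact ⟨0, fun V H S _ => Or.inl ⟨∅, by simp, by simp, by simp⟩⟩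
  | succ s ihs =>
    induction t with
    | zero => exact ⟨0, fun V H S _ => Or.inr ⟨∅, by simp, by simp, by simp⟩⟩
    | succ t iht =>
      obtain ⟨N1, h1⟩ := ihs (t + 1)
      obtain ⟨N2, h2⟩ := iht
      refine ⟨N1 + N2 + 1, fun V H S hS => ?_⟩
      obtain ⟨x, hx⟩ : S.Nonempty := Finset.card_pos.mp (by omega)
      have hc := Finset.card_filter_add_card_filter_not (s := S.erase x) (fun y => H.Adj x y)
      rw [Finset.card_erase_of_mem hx] at hc
      have hsub : ∀ (q : V → Prop) [DecidablePred q], (S.erase x).filter q ⊆ S := fun q _ =>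
        (Finset.filter_subset _ _).trans (Finset.erase_subset _ _)
      by_cases hN : N1 ≤ ((S.erase x).filter (fun y => H.Adj x y)).card
      · rcases h1 V H _ hN with ⟨A, hA, hAc, hAp⟩ | ⟨B, hB, hBc, hBp⟩
        · left
          have hxA : x ∉ A := fun h => by simpa using hA h
          refine ⟨insert x A, ?_, ?_, ?_⟩
          · exact Finset.insert_subset hx (hA.trans (hsub _))
          · rw [Finset.card_insert_of_notMem hxA, hAc]
          · rw [Finset.coe_insert]
            refine hAp.insert fun b hb _ => ?_
            have := hA hb
            simp only [Finset.mem_filter] at this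
            exact ⟨this.2, this.2.symm⟩
        · exact Or.inr ⟨B, hB.trans (hsub _), hBc, hBp⟩
      · have hN2 : N2 ≤ ((S.erase x).filter (fun y => ¬ H.Adj x y)).card := by omega
        rcases h2 V H _ hN2 with ⟨A, hA, hAc, hAp⟩ | ⟨B, hB, hBc, hBp⟩
        · exact Or.inl ⟨A, hA.trans (hsub _), hAc, hAp⟩
        · right
          have hxA : x ∉ B := fun h => by simpa using hB h
          refine ⟨insert x B, ?_, ?_, ?_⟩
          · exact Finset.insert_subset hx (hB.trans (hsub _))
          · rw [Finset.card_insert_of_notMem hxA, hBc]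
          · rw [Finset.coe_insert]
            refine hBp.insert fun b hb _ => ?_
            have := hB hb
            simp only [Finset.mem_filter] at this
            exact ⟨this.2, fun h => this.2 h.symm⟩

theorem ramsey_spec (s t : ℕ) : RamseyProp (ramsey s t) s t := by
  refine Nat.sInf_mem (s := {N | RamseyProp N s t}) ?_
  obtain ⟨N, h⟩ := ramsey_aux s t
  refine ⟨N, fun H => ?_⟩
  rcases h (Fin N) H Finset.univ (by simp) with ⟨A, _, h1, h2⟩ | ⟨A, _, h1, h2⟩
  · exact Or.inl ⟨A, h1, h2⟩
  · exact Or.inr ⟨A, h1, h2⟩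

theorem clique_of_ramsey {V : Type*} [Fintype V] (G : SimpleGraph V) (s : ℕ)
    (g : Fin (ramsey s (indepNum G + 1)) → V) (hg : Function.Injective g) :
    ∃ φ : Fin s ↪o Fin (ramsey s (indepNum G + 1)), ∀ i j, i < j → G.Adj (g (φ i)) (g (φ j)) := by
  classical
  rcases ramsey_spec s (indepNum G + 1) (G.comap g) with ⟨A, hA, hp⟩ | ⟨B, hB, hp⟩
  · refine ⟨A.orderEmbOfFin hA, fun i j hij => ?_⟩
    exact hp (A.orderEmbOfFin_mem hA i) (A.orderEmbOfFin_mem hA j)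
      (fun h => hij.ne ((A.orderEmbOfFin hA).injective h))
  · exfalso
    have : indepNum G + 1 ≤ indepNum G := by
      refine le_csSup (s := {n | ∃ s : Finset V, s.card = n ∧ (s : Set V).Pairwise fun u v => ¬ G.Adj u v}) ⟨Fintype.card V, ?_⟩ ⟨B.image g, ?_, ?_⟩
      · rintro n ⟨s, rfl, _⟩
        exact Finset.card_le_univ s
      · rw [Finset.card_image_of_injective _ hg, hB]
      · intro x hx y hy hxy
        simp only [Finset.coe_image, Set.mem_image] at hx hy
        obtain ⟨a, ha, rfl⟩ := hx
        obtain ⟨b, hb, rfl⟩ := hy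
        exact hp ha hb (fun h => hxy (by rw [h]))
    omega

theorem ramsey_three {V : Type*} [Fintype V] (G : SimpleGraph V) 
    (a b : ℕ → V) (ha : ∀ i j, i < ramsey (ramsey 4 (indepNum G + 1)) (indepNum G + 1) →
      j < ramsey (ramsey 4 (indepNum G + 1)) (indepNum G + 1) → a i = a j → i = j)
    (hb : ∀ i j, i < ramsey (ramsey 4 (indepNum G + 1)) (indepNum G + 1) →
      j < ramsey (ramsey 4 (indepNum G + 1)) (indepNum G + 1) → b i = b j → i = j) :
    ∃ i j k, i < j ∧ j < k ∧ k < ramsey (ramsey 4 (indepNum G + 1)) (indepNum G + 1) ∧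
      G.Adj (a i) (a j) ∧ G.Adj (a j) (a k) ∧ G.Adj (b i) (b j) ∧ G.Adj (b j) (b k) := by
  obtain ⟨φ, hφ⟩ := clique_of_ramsey G (ramsey 4 (indepNum G + 1)) (fun i => a i)
    (fun i j h => Fin.ext (ha i j i.2 j.2 h))
  obtain ⟨ψ, hψ⟩ := clique_of_ramsey G 4 (fun i => b (φ i))
    (fun i j h => φ.injective (Fin.ext (hb _ _ (φ i).2 (φ j).2 h)))
  have h01 : ψ 0 < ψ 1 := ψ.strictMono (by decide)
  have h12 : ψ 1 < ψ 2 := ψ.strictMono (by decide)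
  exact ⟨φ (ψ 0), φ (ψ 1), φ (ψ 2), φ.strictMono h01, φ.strictMono h12, (φ (ψ 2)).2,
    hφ _ _ h01, hφ _ _ h12, hψ _ _ (by decide), hψ _ _ (by decide)⟩

theorem altList_def {V : Type*} [DecidableEq V] (M : Finset (Sym2 V)) (l : List (Sym2 V)) :
    altList M l ↔ List.IsChain (fun e f => ¬((e ∈ M) ↔ (f ∈ M))) l := Iff.rfl

theorem altList_iff_cycle {V : Type*} [DecidableEq V] (M : Finset (Sym2 V)) (l : List (Sym2 V)) :
    altList M (l ++ l.take 1) ↔ Cycle.Chain (fun e f => ¬((e ∈ M) ↔ (f ∈ M))) (l : Cycle (Sym2 V)) := by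
  rw [altList_def]
  cases l with
  | nil => simp
  | cons a l => simp [Cycle.chain_coe_cons]

theorem altList_reverse {V : Type*} [DecidableEq V] (M : Finset (Sym2 V)) (l : List (Sym2 V))
    (h : altList M (l ++ l.take 1)) : altList M (l.reverse ++ l.reverse.take 1) := by
  cases l with
  | nil => exact h
  | cons a m =>
    rw [altList_iff_cycle, List.reverse_cons, ← Cycle.coe_cons_eq_coe_append, Cycle.chain_coe_cons]
    rw [altList_def] at h
    have h2 := List.isChain_reverse.mpr (List.IsChain.imp (S := flip fun e f => ¬((e ∈ M) ↔ (f ∈ M))) (fun a b hab => by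
      simp only [flip]; tauto) h)
    have h3 : (a :: m ++ List.take 1 (a :: m)).reverse = a :: (m.reverse ++ [a]) := by simp
    rw [h3] at h2
    exact h2

theorem align {V : Type*} [DecidableEq V] (G : SimpleGraph V) 
    (M C : Finset (Sym2 V)) (hC : IsAltCycle G M C)
    (u v : V) (p : G.Walk u v) (hpath : p.IsPath) 
    (hPC : p.edges.toFinset ⊆ C) (hpos : 0 < p.length) :
    ∃ c : G.Walk u u, c.IsCycle ∧ c.edges.toFinset = C ∧ altList M (c.edges ++ c.edges.take 1) ∧
      p.length ≤ c.length ∧ ∀ t ≤ p.length, p.getVert t = c.getVert t := by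
  have hmem : ∀ t < p.length, s(p.getVert t, p.getVert (t+1)) ∈ C := fun t ht => hPC (by
    rw [List.mem_toFinset, SimpleGraph.Walk.mk_mem_edges_iff_exists]
    exact ⟨t, ht, rfl⟩)
  obtain ⟨w, c0, hc0, hE0, halt0⟩ := hC
  -- rotate
  have hu : u ∈ c0.support := by
    have := hmem 0 hpos
    rw [← hE0, List.mem_toFinset] at this
    simpa using c0.fst_mem_support_of_mem_edges this
  obtain ⟨c1, hc1, hE1, halt1⟩ : ∃ c : G.Walk u u, c.IsCycle ∧ c.edges.toFinset = C ∧
      altList M (c.edges ++ c.edges.take 1) := by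
    refine ⟨c0.rotate u hu, hc0.rotate hu, ?_, ?_⟩
    · rw [← hE0]; ext e; simp [(c0.rotate_edges u hu).mem_iff]
    · rw [altList_iff_cycle] at halt0 ⊢
      rwa [Cycle.coe_eq_coe.mpr (c0.rotate_edges u hu)]
  obtain ⟨c, hc, hE, halt, hsnd⟩ : ∃ c : G.Walk u u, c.IsCycle ∧ c.edges.toFinset = C ∧
      altList M (c.edges ++ c.edges.take 1) ∧ c.getVert 1 = p.getVert 1 := by
    have h1 := hmem 0 hpos
    rw [← hE1, List.mem_toFinset, ← SimpleGraph.Walk.adj_toSubgraph_iff_mem_edges] at h1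
    have h2 : p.getVert 1 ∈ c1.toSubgraph.neighborSet u := by simpa using h1
    rw [hc1.neighborSet_toSubgraph_endpoint] at h2
    rcases h2 with h2 | h2
    · exact ⟨c1, hc1, hE1, halt1, h2.symm⟩
    · refine ⟨c1.reverse, hc1.reverse, by simpa using hE1, ?_, ?_⟩
      · rw [SimpleGraph.Walk.edges_reverse]; exact altList_reverse M _ halt1
      · rw [h2]; exact SimpleGraph.Walk.snd_reverse c1
  have hind : ∀ t, t ≤ p.length → t ≤ c.length ∧ ∀ s ≤ t, p.getVert s = c.getVert s := by
    intro t
    induction t with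
    | zero => intro _; refine ⟨by omega, fun s hs => ?_⟩; obtain rfl : s = 0 := by omega
              simp
    | succ t ih =>
      intro ht
      obtain ⟨ih1, ih2⟩ := ih (by omega)
      have hlt : t < c.length := by
        rcases ih1.lt_or_eq with h | h
        · exact h
        · exfalso
          have h0 := ih2 t le_rfl
          rw [h, c.getVert_length] at h0
          have := hpath.getVert_injOn (x₁ := c.length) (x₂ := 0) (by simp; omega) (by simp) (by simpa using h0)
          have := hc.three_le_length
          omega
      refine ⟨hlt, fun s hs => ?_⟩
      rcases Nat.lt_or_eq_of_le hs with h | rfl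
      · exact ih2 s (by omega)
      rcases Nat.eq_zero_or_pos t with rfl | htp
      · exact hsnd.symm
      have h1 := hmem t (by omega)
      rw [← hE, List.mem_toFinset, ← SimpleGraph.Walk.adj_toSubgraph_iff_mem_edges, ih2 t le_rfl] at h1
      have h2 : p.getVert (t+1) ∈ c.toSubgraph.neighborSet (c.getVert t) := h1
      rw [hc.neighborSet_toSubgraph_internal (by omega) hlt] at h2
      rcases h2 with h2 | h2
      · exfalso
        rw [← ih2 (t-1) (by omega)] at h2
        have := hpath.getVert_injOn (x₁ := t+1) (x₂ := t-1) (by simp; omega) (by simp; omega) h2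
        omega
      · exact h2
  exact ⟨c, hc, hE, halt, (hind _ le_rfl).1, (hind _ le_rfl).2⟩
theorem isCycle_of_support {V : Type*} {G : SimpleGraph V} {u : V} (w : G.Walk u u)
    (h : w.support.tail.Nodup) (h3 : 3 ≤ w.length) : w.IsCycle := by
  cases w with
  | nil => simp at h3
  | cons hd q =>
    rw [SimpleGraph.Walk.cons_isCycle_iff]
    have hq : q.IsPath := SimpleGraph.Walk.IsPath.mk' (by simpa using h)
    refine ⟨hq, fun hmem => ?_⟩
    have := hq.length_eq_one_of_mem_edges (by rwa [Sym2.eq_swap])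
    simp at h3
    omega

theorem nodup_aux {α : Type*} (T : List α) (hT : T.Nodup) (x y z : ℕ) (hxy : x < y)
    (hyz : y < z) (hz : z < T.length) :
    (T.take x ++ (T[y] :: T[y-1] :: T.drop z)).Nodup := by
  have hinj : ∀ i j (hi : i < T.length) (hj : j < T.length), T[i] = T[j] → i = j :=
    fun i j hi hj h => (hT.getElem_inj_iff).mp h
  rw [List.nodup_append]
  refine ⟨hT.sublist (List.take_sublist _ _), ?_, ?_⟩
  · rw [List.nodup_cons, List.nodup_cons]
    refine ⟨?_, ?_, hT.sublist (List.drop_sublist _ _)⟩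
    · rw [List.mem_cons, List.mem_drop_iff_getElem]
      rintro (h | ⟨i, hi, h⟩)
      · have := hinj _ _ _ _ h; omega
      · have := hinj _ _ _ _ h; omega
    · rw [List.mem_drop_iff_getElem]
      rintro ⟨i, hi, h⟩
      have := hinj _ _ _ _ h; omega
  · intro a ha b hb hab
    subst hab
    rw [List.mem_take_iff_getElem] at ha
    obtain ⟨i, hi, rfl⟩ := ha
    rw [List.mem_cons, List.mem_cons, List.mem_drop_iff_getElem] at hb
    rcases hb with h | h | ⟨k, hk, h⟩ <;> · have := hinj _ _ _ _ h; omega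

theorem skip_core {V : Type*} [DecidableEq V] (G : SimpleGraph V) (red : Sym2 V → Bool)
    (M C : Finset (Sym2 V)) (u : V) (c : G.Walk u u) (hc : c.IsCycle)
    (hE : c.edges.toFinset = C) (halt : altList M (c.edges ++ c.edges.take 1))
    (x y z : ℕ) (hx : 1 ≤ x) (hxy : x + 3 ≤ y) (hyz : y + 3 ≤ z) (hz : z < c.length)
    (hMx : s(c.getVert (x-1), c.getVert x) ∈ M) (hMy : s(c.getVert y, c.getVert (y+1)) ∈ M)
    (hMz : s(c.getVert z, c.getVert (z+1)) ∈ M)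
    (h1 : G.Adj (c.getVert x) (c.getVert (y+1))) (h2 : G.Adj (c.getVert y) (c.getVert z))
    (h1M : s(c.getVert x, c.getVert (y+1)) ∉ M) (h2M : s(c.getVert y, c.getVert z) ∉ M) :
    ∃ D : Finset (Sym2 V), IsAltCycle G M D ∧ s(c.getVert x, c.getVert (y+1)) ∈ D ∧
      s(c.getVert y, c.getVert z) ∈ D ∧
      D \ {s(c.getVert x, c.getVert (y+1)), s(c.getVert y, c.getVert z)} ⊆ C ∧
      D.card < C.card ∧
      (∀ e ∈ C \ D, ∃ t < z, e = s(c.getVert t, c.getVert (t+1))) ∧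
      wSum red M D - wSum red M C = wt red M s(c.getVert x, c.getVert (y+1)) +
        wt red M s(c.getVert y, c.getVert (y+1)) + wt red M s(c.getVert y, c.getVert z) -
        ((List.range' x (z-x)).map (fun t => wt red M s(c.getVert t, c.getVert (t+1)))).sum := by
  have hEl : c.edges.length = c.length := c.length_edges
  have hget : ∀ t (ht : t < c.edges.length), c.edges[t] = s(c.getVert t, c.getVert (t+1)) := by
    intro t ht; exact c.getElem_edges ht
  set mid := (List.range' x (z-x)).map (fun t => s(c.getVert t, c.getVert (t+1))) with hmid
  have hmid' : (c.edges.drop x).take (z-x) = mid := by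
    apply List.ext_getElem
    · simp [hmid]; omega
    · intro i _ _
      simp [hmid, hget]
  have hsplit : c.edges = c.edges.take x ++ (mid ++ c.edges.drop z) := by
    conv_lhs => rw [← List.take_append_drop x c.edges, ← List.take_append_drop (z-x) (c.edges.drop x), hmid',
      List.drop_drop]
    congr 3; omega
  have hm : G.Adj (c.getVert (y+1)) (c.getVert y) := (c.adj_getVert_succ (by omega)).symm
  let d : G.Walk u u := (c.take x).append (.cons h1 (.cons hm (.cons h2 (c.drop z))))
  have hde : d.edges = c.edges.take x ++ (s(c.getVert x, c.getVert (y+1)) ::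
      s(c.getVert y, c.getVert (y+1)) :: s(c.getVert y, c.getVert z) :: c.edges.drop z) := by
    simp only [d, SimpleGraph.Walk.edges_append, SimpleGraph.Walk.edges_cons,
      SimpleGraph.Walk.edges_take, SimpleGraph.Walk.edges_drop]
    rw [Sym2.eq_swap (a := c.getVert (y+1))]
  have hds : d.support.tail = c.support.tail.take x ++ (c.support.tail[y]'(by simp; omega) :: c.support.tail[y-1]'(by simp; omega) ::
      c.support.tail.drop (z-1)) := by
    have e1 : c.support.tail[y]'(by simp; omega) = c.getVert (y+1) := by
      simp [SimpleGraph.Walk.support_getElem_eq_getVert]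
    have e2 : c.support.tail[y-1]'(by simp; omega) = c.getVert y := by
      simp [SimpleGraph.Walk.support_getElem_eq_getVert]
      congr 1; omega
    rw [e1, e2]
    simp only [d, SimpleGraph.Walk.support_append, SimpleGraph.Walk.support_cons, List.tail_cons,
      SimpleGraph.Walk.support_take, SimpleGraph.Walk.drop_support_eq_support_drop_min]
    rw [List.tail_append_of_ne_nil (by simp)]
    rw [← List.drop_one, ← List.drop_one, List.drop_drop, List.drop_take]
    simp only [Nat.add_sub_cancel]
    rw [min_eq_left hz.le, show 1 + (z-1) = z by omega]
  have hdc : d.IsCycle := by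
    apply isCycle_of_support
    · rw [hds]
      exact nodup_aux _ hc.support_nodup x y (z-1) (by omega) (by omega) (by simp; omega)
    · rw [← d.length_edges, hde]; simp; omega
  have hdalt : altList M (d.edges ++ d.edges.take 1) := by
    have ht1 : d.edges.take 1 = c.edges.take 1 := by
      rw [hde, List.take_append_of_le_length (by simp; omega), List.take_take, min_eq_left hx]
    rw [ht1, hde]
    rw [altList_def] at halt ⊢
    have hA : (c.edges ++ c.edges.take 1).take x = c.edges.take x :=
      List.take_append_of_le_length (by omega)
    have hB : (c.edges ++ c.edges.take 1).drop z = c.edges.drop z ++ c.edges.take 1 :=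
      List.drop_append_of_le_length (by omega)
    have cA := halt.take x
    have cB := halt.drop z
    rw [hA] at cA
    rw [hB] at cB
    rw [List.append_assoc, List.isChain_append]
    have hdr : c.edges.drop z = s(c.getVert z, c.getVert (z+1)) :: c.edges.drop (z+1) := by
      rw [List.drop_eq_getElem_cons (by omega), hget]
    refine ⟨cA, ?_, ?_⟩
    · rw [hdr] at cB ⊢
      simp only [List.cons_append, List.isChain_cons_cons] at cB ⊢
      exact ⟨by tauto, by tauto, by tauto, cB⟩
    · intro e he f hf
      simp at hf
      subst hf
      have : e = s(c.getVert (x-1), c.getVert x) := by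
        rw [List.getLast?_take] at he
        have hlt : x - 1 < c.edges.length := by omega
        simp [show x ≠ 0 by omega, List.getElem?_eq_getElem hlt, hget, show x - 1 + 1 = x by omega] at he
        exact he.symm
      subst this
      tauto
  refine ⟨d.edges.toFinset, ⟨u, d, hdc, rfl, hdalt⟩, ?_, ?_, ?_, ?_, ?_, ?_⟩
  · simp [hde]
  · simp [hde]
  · intro e he
    rw [← hE]
    simp only [hde, Finset.mem_sdiff, List.mem_toFinset, List.mem_append, List.mem_cons,
      Finset.mem_insert, Finset.mem_singleton] at he ⊢
    rcases he with ⟨h | h | h | h | h, hn⟩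
    · exact List.mem_of_mem_take h
    · tauto
    · rw [h, SimpleGraph.Walk.mk_mem_edges_iff_exists]
      exact ⟨y, by omega, rfl⟩
    · tauto
    · exact List.mem_of_mem_drop h
  · rw [← hE, List.toFinset_card_of_nodup hdc.edges_nodup, List.toFinset_card_of_nodup hc.edges_nodup]
    rw [hde]; simp; omega
  · intro e he
    rw [← hE, hde, Finset.mem_sdiff, List.mem_toFinset, hsplit] at he
    simp only [List.mem_toFinset, List.mem_append, List.mem_cons] at he
    have hem : e ∈ mid := by
      rw [← hsplit] at he
      tauto
    simp only [hmid, List.mem_map, List.mem_range'_1] at hem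
    obtain ⟨t, ht, rfl⟩ := hem
    exact ⟨t, by omega, rfl⟩
  · have s1 : wSum red M C = (c.edges.map (wt red M)).sum := by
      rw [← hE]; exact List.sum_toFinset _ hc.edges_nodup
    have s2 : wSum red M d.edges.toFinset = (d.edges.map (wt red M)).sum :=
      List.sum_toFinset _ hdc.edges_nodup
    have s3 : ((List.range' x (z-x)).map (fun t => wt red M s(c.getVert t, c.getVert (t+1)))).sum
        = (mid.map (wt red M)).sum := by rw [hmid, List.map_map]; rfl
    rw [s2, hde, s1, s3]
    have s4 := congrArg (fun l => (List.map (wt red M) l).sum) hsplit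
    simp only [List.map_append, List.sum_append, List.map_cons, List.sum_cons] at s4 ⊢
    linarith
theorem pm_unique {V : Type*} [DecidableEq V] {G : SimpleGraph V} {M : Finset (Sym2 V)}
    (hM : IsPM G M) {a b c : V} (h1 : s(a, b) ∈ M) (h2 : s(a, c) ∈ M) : b = c := by
  obtain ⟨e, _, he⟩ := hM.2 a
  have e1 := he _ ⟨h1, by simp⟩
  have e2 := he _ ⟨h2, by simp⟩
  have : s(a, b) = s(a, c) := e1.trans e2.symm
  rcases Sym2.eq_iff.mp this with ⟨_, h⟩ | ⟨h, h'⟩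
  · exact h
  · exact h'.trans h

theorem four {V : Type*} [DecidableEq V] {G : SimpleGraph V} {M : Finset (Sym2 V)}
    (hM : IsPM G M) {a b a' b' : V} (h1 : s(a, b) ∈ M) (h2 : s(a', b') ∈ M)
    (haa : G.Adj a a') (hbb : G.Adj b b') (hab : a ≠ b') (hba : b ≠ a') :
    s(a, a') ∉ M ∧ s(b, b') ∉ M ∧ s(a, a') ≠ s(b, b') ∧
    ∃ D : Finset (Sym2 V), IsAltCycle G M D ∧ s(a, a') ∈ D ∧ s(b, b') ∈ D ∧
      (∀ e ∈ D \ {s(a, a'), s(b, b')}, e = s(a, b) ∨ e = s(a', b')) ∧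
      ∀ f : Sym2 V → ℤ, ∑ e ∈ D, f e = f s(a, a') + f s(b, b') + f s(a, b) + f s(a', b') := by
  have g1 : G.Adj a b := hM.1 h1
  have g2 : G.Adj a' b' := hM.1 h2
  have n1 : s(a, a') ∉ M := fun h => hba (pm_unique hM h1 h)
  have n2 : s(b, b') ∉ M := fun h => hab (pm_unique hM (by rwa [Sym2.eq_swap]) h)
  have d1 := g1.ne
  have d2 := g2.ne
  have d3 := haa.ne
  have d4 := hbb.ne
  let w : G.Walk a a := .cons g1 (.cons hbb (.cons g2.symm (.cons haa.symm .nil)))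
  have hw : w.edges = [s(a, b), s(b, b'), s(b', a'), s(a', a)] := by simp [w]
  have hwc : w.IsCycle := by
    apply isCycle_of_support
    · simp only [w, SimpleGraph.Walk.support_cons, SimpleGraph.Walk.support_nil, List.tail_cons]
      simp
      grind
    · simp [w]
  refine ⟨n1, n2, ?_, w.edges.toFinset, ⟨a, w, hwc, rfl, ?_⟩, ?_, ?_, ?_, ?_⟩
  · simp; grind
  · rw [altList_def, hw]
    rw [Sym2.eq_swap] at h2
    rw [Sym2.eq_swap] at n1
    simp [h1, h2, n1, n2]
  · simp [hw, Sym2.eq_swap]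
  · simp [hw]
  · intro e he
    rw [hw] at he
    rw [Sym2.eq_swap (a := b'), Sym2.eq_swap (a := a') (b := a)] at he
    simp only [Finset.mem_sdiff, List.mem_toFinset, List.mem_cons, Finset.mem_insert,
      Finset.mem_singleton, List.not_mem_nil] at he
    tauto
  · intro f
    rw [List.sum_toFinset _ hwc.edges_nodup, hw, Sym2.eq_swap (a := b'), Sym2.eq_swap (a := a') (b := a)]
    simp
    ring

theorem alt_parity {V : Type*} [DecidableEq V] {G : SimpleGraph V} {M : Finset (Sym2 V)}
    {u v : V} (p : G.Walk u v) (halt : altList M p.edges)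
    (hstart : ∀ e : Sym2 V, p.edges.head? = some e → e ∉ M) :
    ∀ t < p.length, (s(p.getVert t, p.getVert (t+1)) ∈ M ↔ t % 2 = 1) := by
  have hget : ∀ t (ht : t < p.edges.length), p.edges[t] = s(p.getVert t, p.getVert (t+1)) := by
    intro t ht; exact p.getElem_edges ht
  have hl : p.edges.length = p.length := p.length_edges
  rw [altList_def, List.isChain_iff_getElem] at halt
  intro t
  induction t with
  | zero =>
    intro ht
    have := hstart (s(p.getVert 0, p.getVert (0+1))) (by
      rw [List.head?_eq_getElem?, List.getElem?_eq_getElem (by omega), hget])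
    simpa using this
  | succ t ih =>
    intro ht
    have h := ih (by omega)
    have h2 := halt t (by omega)
    rw [hget, hget] at h2
    have : (t+1) % 2 = 1 ↔ ¬ (t % 2 = 1) := by omega
    tauto

theorem alt_sum (x n : ℕ) :
    ((List.range' x n).map (fun t => if t % 2 = 1 then (-1 : ℤ) else 1)).sum =
      if n % 2 = 0 then 0 else if x % 2 = 1 then -1 else 1 := by
  induction n generalizing x with
  | zero => simp
  | succ n ih =>
    rw [List.range'_succ, List.map_cons, List.sum_cons, ih]
    rcases Nat.mod_two_eq_zero_or_one n with h | h <;> rcases Nat.mod_two_eq_zero_or_one x with h' | h' <;>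
      simp [Nat.add_mod, h, h']

theorem not_chord {V : Type*} {G : SimpleGraph V} {u : V} (c : G.Walk u u) (hc : c.IsCycle)
    (x y : ℕ) (hx : 0 < x) (hxy : x + 1 < y) (hy : y < c.length) :
    s(c.getVert x, c.getVert y) ∉ c.edges := by
  rw [SimpleGraph.Walk.mk_mem_edges_iff_exists]
  rintro ⟨t, ht, h⟩
  have inj : ∀ i j, 0 < i → i < c.length → j ≤ c.length → c.getVert j = c.getVert i → j = i := by
    intro i j h1 h2 h3 h4
    rcases Nat.eq_zero_or_pos j with rfl | hj
    · exact hc.getVert_injOn' (by simp) (by simp; omega) h4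
    · exact hc.getVert_injOn (by simp; omega) (by simp; omega) h4
  rw [Sym2.eq_iff] at h
  rcases h with ⟨h1, h2⟩ | ⟨h1, h2⟩
  · have := inj _ _ (by omega) (by omega) (by omega) h1
    have := inj _ _ (by omega) (by omega) (by omega) h2
    omega
  · have := inj _ _ (by omega) (by omega) (by omega) h1
    have := inj _ _ (by omega) (by omega) (by omega) h2
    omega


theorem num_blue {V : Type*} [DecidableEq V] (red : Sym2 V → Bool) (M : Finset (Sym2 V))
    (e1 e2 f1 f2 : Sym2 V) (h1 : e1 ∉ M) (h2 : e2 ∉ M) (r1 : red f1 = false)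
    (r2 : red f2 = false) (h : red e1 = true ∨ red e2 = true) :
    0 < wt red M e1 + wt red M e2 + wt red M f1 + wt red M f2 ∧
    wt red M e1 + wt red M e2 + wt red M f1 + wt red M f2 ≤ 2 ∧
    (if red e1 = true then (1:ℤ) else 0) + (if red e2 = true then (1:ℤ) else 0) +
      (if red f1 = true then (1:ℤ) else 0) + (if red f2 = true then (1:ℤ) else 0) =
    wt red M e1 + wt red M e2 + wt red M f1 + wt red M f2 := by
  cases x : red e1 <;> cases y : red e2 <;> simp_all [wt]

theorem num_red {V : Type*} [DecidableEq V] (red : Sym2 V → Bool) (M : Finset (Sym2 V))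
    (e1 e2 f1 f2 : Sym2 V) (h1 : e1 ∉ M) (h2 : e2 ∉ M) (m1 : f1 ∈ M) (m2 : f2 ∈ M)
    (r1 : red f1 = true)
    (r2 : red f2 = true) (h : red e1 = false ∨ red e2 = false) :
    -2 ≤ wt red M e1 + wt red M e2 + wt red M f1 + wt red M f2 ∧
    wt red M e1 + wt red M e2 + wt red M f1 + wt red M f2 < 0 ∧
    (if red e1 = false then (1:ℤ) else 0) + (if red e2 = false then (1:ℤ) else 0) +
      (if red f1 = false then (1:ℤ) else 0) + (if red f2 = false then (1:ℤ) else 0) =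
    |wt red M e1 + wt red M e2 + wt red M f1 + wt red M f2| := by
  cases x : red e1 <;> cases y : red e2 <;> simp_all [wt]


set_option maxHeartbeats 1000000 in
/-- Lemma "skip or cycle": let `C` be an `M`-alternating cycle and `P ⊆ C` a monochromatic
`M`-alternating path of length at least `6·R(R(4,α+1),α+1)` starting with a non-matching
edge and containing no 0-skip. If `P` is blue, there are two chords `e1, e2` with endpoints
on `P`, at least one red, closing up with parts of `C` into an `M`-alternating cycle `C'`
with `0 < w_M(C') ≤ 2` whose number of red edges equals `w_M(C')`; if `P` is red, the
symmetric conclusion holds. -/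
theorem skip_or_small_cycle
    {V : Type*} [Fintype V] [DecidableEq V] (G : SimpleGraph V) (red : Sym2 V → Bool)
    (M C : Finset (Sym2 V)) (hM : IsPM G M) (hC : IsAltCycle G M C)
    (u v : V) (p : G.Walk u v) (hpath : p.IsPath) (halt : altList M p.edges)
    (hPC : p.edges.toFinset ⊆ C)
    (hlen : 6 * ramsey (ramsey 4 (indepNum G + 1)) (indepNum G + 1) ≤ p.length)
    (hstart : ∀ e : Sym2 V, p.edges.head? = some e → e ∉ M)
    (hnoskip : ¬ ∃ S : Skip G red M C, S.w = 0 ∧ S.In p.edges.toFinset) :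
    ((∀ e ∈ p.edges, red e = false) →
      ∃ (e1 e2 : Sym2 V) (C' : Finset (Sym2 V)),
        e1 ∈ G.edgeSet ∧ e2 ∈ G.edgeSet ∧ e1 ≠ e2 ∧
        (∀ a : V, a ∈ e1 → ∃ f ∈ p.edges, a ∈ f) ∧
        (∀ a : V, a ∈ e2 → ∃ f ∈ p.edges, a ∈ f) ∧
        (red e1 = true ∨ red e2 = true) ∧
        IsAltCycle G M C' ∧ e1 ∈ C' ∧ e2 ∈ C' ∧ C' \ {e1, e2} ⊆ C ∧
        0 < wSum red M C' ∧ wSum red M C' ≤ 2 ∧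
        (redCount red C' : ℤ) = wSum red M C') ∧
    ((∀ e ∈ p.edges, red e = true) →
      ∃ (e1 e2 : Sym2 V) (C' : Finset (Sym2 V)),
        e1 ∈ G.edgeSet ∧ e2 ∈ G.edgeSet ∧ e1 ≠ e2 ∧
        (∀ a : V, a ∈ e1 → ∃ f ∈ p.edges, a ∈ f) ∧
        (∀ a : V, a ∈ e2 → ∃ f ∈ p.edges, a ∈ f) ∧
        (red e1 = false ∨ red e2 = false) ∧
        IsAltCycle G M C' ∧ e1 ∈ C' ∧ e2 ∈ C' ∧ C' \ {e1, e2} ⊆ C ∧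
        -2 ≤ wSum red M C' ∧ wSum red M C' < 0 ∧
        (blueCount red C' : ℤ) = |wSum red M C'|) := by
  classical
  set R := ramsey (ramsey 4 (indepNum G + 1)) (indepNum G + 1) with hR
  have hinj : ∀ s t, s ≤ p.length → t ≤ p.length → p.getVert s = p.getVert t → s = t :=
    fun s t hs ht h => hpath.getVert_injOn hs ht h
  obtain ⟨i, j, k, hij, hjk, hkR, a1, a2, b1, b2⟩ := ramsey_three G
    (fun t => p.getVert (6*t+1)) (fun t => p.getVert (6*t+2))
    (fun i j hi hj h => by have := hinj _ _ (by omega) (by omega) h; omega)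
    (fun i j hi hj h => by have := hinj _ _ (by omega) (by omega) h; omega)
  rw [← hR] at hkR
  have hpar := alt_parity p halt hstart
  have hpe : ∀ t < p.length, s(p.getVert t, p.getVert (t+1)) ∈ p.edges := fun t ht => by
    rw [SimpleGraph.Walk.mk_mem_edges_iff_exists]; exact ⟨t, ht, rfl⟩
  have hon : ∀ t < p.length, ∃ f ∈ p.edges, p.getVert t ∈ f := fun t ht =>
    ⟨_, hpe t ht, by simp⟩
  have hon2 : ∀ s t, s < p.length → t < p.length → ∀ a : V, a ∈ s(p.getVert s, p.getVert t) →
      ∃ f ∈ p.edges, a ∈ f := by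
    intro s t hs ht a ha
    rw [Sym2.mem_iff] at ha
    rcases ha with rfl | rfl
    · exact hon s hs
    · exact hon t ht
  have hmat : ∀ t < R, s(p.getVert (6*t+1), p.getVert (6*t+2)) ∈ M := fun t ht =>
    (hpar (6*t+1) (by omega)).mpr (by omega)
  -- the four-cycles
  have hfour : ∀ s t, s < t → t < R → G.Adj (p.getVert (6*s+1)) (p.getVert (6*t+1)) →
      G.Adj (p.getVert (6*s+2)) (p.getVert (6*t+2)) → _ := fun s t hst ht ha hb =>
    four hM (hmat s (by omega)) (hmat t ht) ha hb
      (fun h => by have := hinj _ _ (by omega) (by omega) h; omega)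
      (fun h => by have := hinj _ _ (by omega) (by omega) h; omega)
  -- the skip
  have n1 := (hfour i j hij (by omega) a1 b1).2.1
  have n2 := (hfour j k hjk (by omega) a2 b2).1
  have hskip : wt red M s(p.getVert (6*i+2), p.getVert (6*j+2)) +
        wt red M s(p.getVert (6*j+1), p.getVert (6*j+2)) +
        wt red M s(p.getVert (6*j+1), p.getVert (6*k+1)) -
        ((List.range' (6*i+2) (6*k+1-(6*i+2))).map
          (fun t => wt red M s(p.getVert t, p.getVert (t+1)))).sum ≠ 0 := by
    intro hzero
    obtain ⟨c, hc, hE, hcalt, hLc, hpc⟩ := align G M C hC u v p hpath hPC (by omega)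
    have hne : s(p.getVert (6*i+2), p.getVert (6*j+2)) ≠ s(p.getVert (6*j+1), p.getVert (6*k+1)) := by
      intro h
      rw [Sym2.eq_iff] at h
      rcases h with ⟨h, _⟩ | ⟨h, _⟩ <;>
        · have := hinj _ _ (by omega) (by omega) h; omega
    have g1 := b1
    have g2 := a2
    have m0 := (hpar (6*i+1) (by omega)).mpr (by omega)
    have m1 := (hpar (6*j+1) (by omega)).mpr (by omega)
    have m2 := (hpar (6*k+1) (by omega)).mpr (by omega)
    have k1 : s(p.getVert (6*i+2), p.getVert (6*j+2)) ∉ C := by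
      rw [← hE, List.mem_toFinset, hpc _ (by omega), hpc _ (by omega)]
      exact not_chord c hc _ _ (by omega) (by omega) (by omega)
    have k2 : s(p.getVert (6*j+1), p.getVert (6*k+1)) ∉ C := by
      rw [← hE, List.mem_toFinset, hpc _ (by omega), hpc _ (by omega)]
      exact not_chord c hc _ _ (by omega) (by omega) (by omega)
    have hsum : ((List.range' (6*i+2) (6*k+1-(6*i+2))).map
          (fun t => wt red M s(p.getVert t, p.getVert (t+1)))).sum =
        ((List.range' (6*i+2) (6*k+1-(6*i+2))).map
          (fun t => wt red M s(c.getVert t, c.getVert (t+1)))).sum := by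
      congr 1
      apply List.map_congr_left
      intro t ht
      rw [List.mem_range'_1] at ht
      rw [hpc _ (by omega), hpc _ (by omega)]
    obtain ⟨D, D1, D2, D3, D4, D5, D6, D7⟩ := skip_core G red M C u c hc hE hcalt (6*i+2) (6*j+1) (6*k+1)
      (by omega) (by omega) (by omega) (by omega)
      (by rw [← hpc _ (by omega), ← hpc _ (by omega)]; exact m0)
      (by rw [← hpc _ (by omega), ← hpc _ (by omega)]; exact m1)
      (by rw [← hpc _ (by omega), ← hpc _ (by omega)]; exact m2)
      (by rw [← hpc _ (by omega), ← hpc _ (by omega)]; exact g1)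
      (by rw [← hpc _ (by omega), ← hpc _ (by omega)]; exact g2)
      (by rw [← hpc _ (by omega), ← hpc _ (by omega)]; exact n1)
      (by rw [← hpc _ (by omega), ← hpc _ (by omega)]; exact n2)
    rw [← hsum] at D7
    simp only [Nat.add_assoc, Nat.reduceAdd] at D2 D3 D4 D7
    rw [← hpc (6*i+2) (by omega), ← hpc (6*j+2) (by omega), ← hpc (6*j+1) (by omega),
      ← hpc (6*k+1) (by omega)] at D7 D4
    rw [← hpc (6*i+2) (by omega), ← hpc (6*j+2) (by omega)] at D2
    rw [← hpc (6*j+1) (by omega), ← hpc (6*k+1) (by omega)] at D3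
    rw [hzero] at D7
    refine hnoskip ⟨⟨_, _, D, hne, g1, g2, n1, n2, k1, k2, D1, D2, D3, D4, D5, ?_⟩, D7, ?_⟩
    · rw [D7]; simp
    · intro e he
      obtain ⟨t, ht, rfl⟩ := D6 e he
      rw [List.mem_toFinset, ← hpc _ (by omega), ← hpc _ (by omega)]
      exact hpe t (by omega)
  have hrc : ∀ D : Finset (Sym2 V), (redCount red D : ℤ) = ∑ e ∈ D, if red e = true then (1:ℤ) else 0 := by
    intro D; simp [redCount]
  have hbc : ∀ D : Finset (Sym2 V), (blueCount red D : ℤ) = ∑ e ∈ D, if red e = false then (1:ℤ) else 0 := by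
    intro D; simp [blueCount]
  constructor
  · intro hblue
    by_contra hcon
    have main : ∀ s t, s < t → t < R → G.Adj (p.getVert (6*s+1)) (p.getVert (6*t+1)) →
      G.Adj (p.getVert (6*s+2)) (p.getVert (6*t+2)) → 
      (red s(p.getVert (6*s+1), p.getVert (6*t+1)) = true ∨
        red s(p.getVert (6*s+2), p.getVert (6*t+2)) = true) → False := by
      intro s t hst ht ha hb hred
      obtain ⟨q1, q2, q3, D, D1, D2, D3, D4, D5⟩ := hfour s t hst ht ha hb
      have r1 := hblue _ (hpe (6*s+1) (by omega))
      have r2 := hblue _ (hpe (6*t+1) (by omega))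
      have hw := D5 (wt red M)
      have hr := D5 (fun e => if red e = true then (1:ℤ) else 0)
      refine hcon ⟨s(p.getVert (6*s+1), p.getVert (6*t+1)), s(p.getVert (6*s+2), p.getVert (6*t+2)), D,
        ha, hb, q3, hon2 _ _ (by omega) (by omega), hon2 _ _ (by omega) (by omega), hred,
        D1, D2, D3, ?_, ?_⟩
      · intro e he
        apply hPC
        rw [List.mem_toFinset]
        rcases D4 e he with rfl | rfl
        · exact hpe (6*s+1) (by omega)
        · exact hpe (6*t+1) (by omega)
      · simp only [Nat.add_assoc, Nat.reduceAdd] at r1 r2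
        rw [hrc, hr, wSum, hw]
        exact num_blue red M _ _ _ _ q1 q2 r1 r2 hred
    have f1 : ¬ (_ ∨ _) := fun h => main i j hij (by omega) a1 b1 h
    have f2 : ¬ (_ ∨ _) := fun h => main j k hjk (by omega) a2 b2 h
    simp only [not_or, Bool.not_eq_true, Bool.not_eq_false] at f1 f2
    apply hskip
    have r := hblue _ (hpe (6*j+1) (by omega))
    simp only [Nat.add_assoc, Nat.reduceAdd] at r
    have hs : (List.range' (6*i+2) (6*k+1-(6*i+2))).map
          (fun t => wt red M s(p.getVert t, p.getVert (t+1))) =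
        (List.range' (6*i+2) (6*k+1-(6*i+2))).map (fun t => (0 : ℤ)) := by
      apply List.map_congr_left
      intro t ht
      rw [List.mem_range'_1] at ht
      have r' := hblue _ (hpe t (by omega))
      have r'' := hpar t (by omega)
      simp only [wt, r']
      simp
    rw [hs]
    simp [wt, f1.2, f2.1, r]
  · intro hred'
    by_contra hcon
    have main : ∀ s t, s < t → t < R → G.Adj (p.getVert (6*s+1)) (p.getVert (6*t+1)) →
      G.Adj (p.getVert (6*s+2)) (p.getVert (6*t+2)) → 
      (red s(p.getVert (6*s+1), p.getVert (6*t+1)) = false ∨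
        red s(p.getVert (6*s+2), p.getVert (6*t+2)) = false) → False := by
      intro s t hst ht ha hb hred
      obtain ⟨q1, q2, q3, D, D1, D2, D3, D4, D5⟩ := hfour s t hst ht ha hb
      have r1 := hred' _ (hpe (6*s+1) (by omega))
      have r2 := hred' _ (hpe (6*t+1) (by omega))
      have hw := D5 (wt red M)
      have hr := D5 (fun e => if red e = false then (1:ℤ) else 0)
      refine hcon ⟨s(p.getVert (6*s+1), p.getVert (6*t+1)), s(p.getVert (6*s+2), p.getVert (6*t+2)), D,
        ha, hb, q3, hon2 _ _ (by omega) (by omega), hon2 _ _ (by omega) (by omega), hred,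
        D1, D2, D3, ?_, ?_⟩
      · intro e he
        apply hPC
        rw [List.mem_toFinset]
        rcases D4 e he with rfl | rfl
        · exact hpe (6*s+1) (by omega)
        · exact hpe (6*t+1) (by omega)
      · simp only [Nat.add_assoc, Nat.reduceAdd] at r1 r2
        rw [hbc, hr, wSum, hw]
        have m1 := hmat s (by omega)
        have m2 := hmat t ht
        exact num_red red M _ _ _ _ q1 q2 m1 m2 r1 r2 hred
    have f1 : ¬ (_ ∨ _) := fun h => main i j hij (by omega) a1 b1 h
    have f2 : ¬ (_ ∨ _) := fun h => main j k hjk (by omega) a2 b2 h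
    simp only [not_or, Bool.not_eq_true, Bool.not_eq_false] at f1 f2
    apply hskip
    have r := hred' _ (hpe (6*j+1) (by omega))
    simp only [Nat.add_assoc, Nat.reduceAdd] at r
    have hs : (List.range' (6*i+2) (6*k+1-(6*i+2))).map
          (fun t => wt red M s(p.getVert t, p.getVert (t+1))) =
        (List.range' (6*i+2) (6*k+1-(6*i+2))).map (fun t => if t % 2 = 1 then (-1 : ℤ) else 1) := by
      apply List.map_congr_left
      intro t ht
      rw [List.mem_range'_1] at ht
      have r' := hred' _ (hpe t (by omega))
      have r'' := hpar t (by omega)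
      simp only [wt, r']
      simp [r'']
    rw [hs]
    rw [alt_sum]
    have hmj := hmat j (by omega)
    have e1 : (6*k+1-(6*i+2)) % 2 ≠ 0 := by omega
    have e2 : (6*i+2) % 2 ≠ 1 := by omega
    rw [if_neg e1, if_neg e2]
    simp [wt, f1.2, f2.1, r, n1, n2, hmj]
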